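/- Let $G$ be a group and suppose that for some algebraically closed field $K$ of characteristic $0$ the group ring $K[G]$ is not stably finite. Then there exists an integer $N$ such that for every algebraically closed field $L$ of prime characteristic $p \geq N$, the group ring $L[G]$ is not stably finite. -/

import Mathlib

/-!
A witness `A * B = 1`, `B * A ≠ 1` over `K[G]` involves only finitely many scalars, so it lives over
a finitely generated subring `S` of `K`; let `S` also contain the inverse of a nonzero coefficient
`c` of an entry of `B * A - 1`. Any ring homomorphism `S → L` to a field then keeps `c` nonzero, and
so transports the witness to `L[G]`.

It remains to find homomorphisms `S → L` for every algebraically closed `L` of large characteristic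
(`exists_bound_forall_ringHom`). By Chevalley's theorem the image of `Spec S → Spec ℤ` is
constructible, and it contains the generic point because `ℤ → S` is injective. Hence it contains
`(p)` for all but finitely many primes `p` (`exists_bound_forall_prime_mem`). For such `p`, some
maximal ideal of `S` contains `p`; its residue field is finite over `𝔽_p` by Zariski's lemma, and so
embeds into `L` (`exists_ringHom_of_mem_prime`).
-/

/-- A ring `R` is stably finite if for every `d ≥ 1` and all `d × d` matrices `A B` over `R`,
`A * B = 1` implies `B * A = 1`. -/
def IsStablyFinite (R : Type*) [Ring R] : Prop :=
  ∀ d : ℕ, 1 ≤ d → ∀ A B : Matrix (Fin d) (Fin d) R, A * B = 1 → B * A = 1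

/-- A constructible subset of `Spec ℤ` containing the generic point has a piece
`V(g₁, ..., gₙ) \ V(f)` with all `gᵢ = 0` and `f ≠ 0`; so it contains every prime not dividing `f`.
Applied to the image of `Spec S`, this bounds the primes that are invertible in `S`. -/
lemma exists_bound_forall_prime_mem (S : Type*) [CommRing S] [IsDomain S] [CharZero S]
    [Algebra.FiniteType ℤ S] :
    ∃ N : ℕ, ∀ p : ℕ, p.Prime → N ≤ p → ∃ q : Ideal S, q.IsPrime ∧ (p : S) ∈ q := by
  have hfp : (algebraMap ℤ S).FinitePresentation :=
    RingHom.finitePresentation_algebraMap.mpr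
      (Algebra.FinitePresentation.of_finiteType.mp inferInstance)
  obtain ⟨D, hD⟩ := PrimeSpectrum.exists_constructibleSetData_iff.mpr
    (PrimeSpectrum.isConstructible_range_comap hfp)
  have hgen : PrimeSpectrum.comap (algebraMap ℤ S) ⟨⊥, Ideal.isPrime_bot⟩ ∈ D.toSet := by
    rw [hD]
    exact ⟨_, rfl⟩
  simp only [PrimeSpectrum.ConstructibleSetData.toSet, Set.mem_iUnion] at hgen
  obtain ⟨C, hC, hg, hf⟩ := hgen
  have hf0 : C.f ≠ 0 := by
    rintro h
    apply hf
    simp [h]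
  have hg0 : ∀ i, C.g i = 0 := by
    intro i
    have h := hg (Set.mem_range_self i)
    simpa using h
  refine ⟨C.f.natAbs + 1, fun p hp hNp => ?_⟩
  have hpZ : Prime (p : ℤ) := Nat.prime_iff_prime_int.mp hp
  have hmem : (⟨Ideal.span {(p : ℤ)}, (Ideal.span_singleton_prime hpZ.ne_zero).mpr hpZ⟩ :
      PrimeSpectrum ℤ) ∈ D.toSet := by
    simp only [PrimeSpectrum.ConstructibleSetData.toSet, Set.mem_iUnion]
    refine ⟨C, hC, ?_, ?_⟩
    · rintro _ ⟨i, rfl⟩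
      simp [hg0 i]
    · intro h
      have h1 : (p : ℤ) ∣ C.f := Ideal.mem_span_singleton.mp (h rfl)
      have h2 := Int.natAbs_dvd_natAbs.mpr h1
      have h3 := Nat.le_of_dvd (Int.natAbs_pos.mpr hf0) h2
      simp at h3
      omega
  rw [hD] at hmem
  obtain ⟨q, hq⟩ := hmem
  refine ⟨q.asIdeal, q.isPrime, ?_⟩
  have h : (p : ℤ) ∈ (PrimeSpectrum.comap (algebraMap ℤ S) q).asIdeal := by
    rw [hq]
    exact Ideal.mem_span_singleton_self _
  simpa using h

lemma exists_ringHom_of_mem_prime (S : Type*) [CommRing S] [Algebra.FiniteType ℤ S]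
    (L : Type*) [Field L] [IsAlgClosed L] (p : ℕ) (hp : p.Prime) [CharP L p]
    (q : Ideal S) (hq : q.IsPrime) (hpq : (p : S) ∈ q) : Nonempty (S →+* L) := by
  have : Fact p.Prime := ⟨hp⟩
  obtain ⟨m, hm, hqm⟩ := Ideal.exists_le_maximal q hq.ne_top
  let : Field (S ⧸ m) := Ideal.Quotient.field m
  have hp0 : (p : S ⧸ m) = 0 := by
    rw [← map_natCast (Ideal.Quotient.mk m)]
    exact Ideal.Quotient.eq_zero_iff_mem.mpr (hqm hpq)
  have : CharP (S ⧸ m) p := (CharP.charP_iff_prime_eq_zero hp).mpr hp0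
  let : Algebra (ZMod p) (S ⧸ m) := ZMod.algebra _ p
  let : Algebra (ZMod p) L := ZMod.algebra _ p
  have : Algebra.FiniteType ℤ (S ⧸ m) :=
    Algebra.FiniteType.of_surjective (Ideal.Quotient.mkₐ ℤ m) (Ideal.Quotient.mkₐ_surjective ℤ m)
  have : Algebra.FiniteType (ZMod p) (S ⧸ m) :=
    Algebra.FiniteType.of_restrictScalars_finiteType ℤ (ZMod p) (S ⧸ m)
  have : Module.Finite (ZMod p) (S ⧸ m) := finite_of_finite_type_of_isJacobsonRing _ _
  exact ⟨(IsAlgClosed.lift : (S ⧸ m) →ₐ[ZMod p] L).toRingHom.comp (Ideal.Quotient.mk m)⟩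

lemma exists_bound_forall_ringHom (S : Type*) [CommRing S] [IsDomain S] [CharZero S]
    [Algebra.FiniteType ℤ S] :
    ∃ N : ℕ, ∀ (L : Type*) [Field L] [IsAlgClosed L] (p : ℕ), p.Prime → CharP L p →
      N ≤ p → Nonempty (S →+* L) := by
  obtain ⟨N, hN⟩ := exists_bound_forall_prime_mem S
  refine ⟨N, fun L _ _ p hp hL hNp => ?_⟩
  obtain ⟨q, hq, hpq⟩ := hN p hp hNp
  exact exists_ringHom_of_mem_prime S L p hp q hq hpq

lemma mapRingHom_injective {R S G : Type*} [CommRing R] [CommRing S] [Group G] (f : R →+* S)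
    (hf : Function.Injective f) : Function.Injective (MonoidAlgebra.mapRingHom G f) := by
  intro x y h
  ext g
  apply hf
  rw [← MonoidAlgebra.coeff_mapRingHom, ← MonoidAlgebra.coeff_mapRingHom, h]

lemma mem_range_mapRingHom {R S G : Type*} [CommRing R] [CommRing S] [Group G] (f : R →+* S)
    (x : MonoidAlgebra S G) (hx : ∀ g ∈ x.coeff.support, x.coeff g ∈ f.range) :
    ∃ y, MonoidAlgebra.mapRingHom G f y = x := by
  change x ∈ (MonoidAlgebra.mapRingHom G f).range
  rw [← MonoidAlgebra.sum_coeff_single x]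
  refine Subring.sum_mem _ fun g hg => ?_
  obtain ⟨r, hr⟩ := hx g hg
  exact ⟨MonoidAlgebra.single g r, by rw [MonoidAlgebra.mapRingHom_single, hr]⟩

theorem exists_bound_of_not_stably_finite_char_zero
    {G : Type*} [Group G] (K : Type*) [Field K] [IsAlgClosed K] [CharZero K]
    (hK : ¬ IsStablyFinite (MonoidAlgebra K G)) :
    ∃ N : ℕ, ∀ (L : Type v) [Field L] [IsAlgClosed L] (p : ℕ), p.Prime → CharP L p →
      N ≤ p → ¬ IsStablyFinite (MonoidAlgebra L G) := by
  unfold IsStablyFinite at hK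
  push Not at hK
  obtain ⟨d, hd, A, B, hAB, hBA⟩ := hK
  obtain ⟨i, j, hij⟩ : ∃ i j, (B * A - 1) i j ≠ 0 := by
    by_contra! h
    exact hBA (sub_eq_zero.mp (Matrix.ext h))
  obtain ⟨g, hc⟩ : ∃ g, ((B * A - 1) i j).coeff g ≠ 0 := by
    by_contra! h
    apply hij
    ext g
    simpa using h g
  set c := ((B * A - 1) i j).coeff g with hcdef
  classical
  let T : Set K := (⋃ k, ⋃ l, (A k l).coeff '' ((A k l).coeff.support : Set G)) ∪
    (⋃ k, ⋃ l, (B k l).coeff '' ((B k l).coeff.support : Set G)) ∪ {c⁻¹}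
  have hT : T.Finite := by
    refine Set.Finite.union (Set.Finite.union ?_ ?_) (Set.finite_singleton _) <;>
    exact Set.finite_iUnion fun k => Set.finite_iUnion fun l => (Finset.finite_toSet _).image _
  let S := Algebra.adjoin ℤ T
  have hTS : T ⊆ S := Algebra.subset_adjoin
  have : Algebra.FiniteType ℤ S :=
    (Subalgebra.fg_iff_finiteType S).mp (Subalgebra.fg_def.mpr ⟨T, hT, rfl⟩)
  obtain ⟨N, hN⟩ := exists_bound_forall_ringHom S
  refine ⟨N, fun L _ _ p hp hL hNp hst => ?_⟩
  obtain ⟨ψ⟩ := hN L p hp hL hNp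
  let ι : S →+* K := S.val.toRingHom
  have hι : Function.Injective ι := Subtype.val_injective
  have hA : ∀ k l, ∃ y, MonoidAlgebra.mapRingHom G ι y = A k l := fun k l =>
    mem_range_mapRingHom ι _ fun g hg => ⟨⟨_, hTS (Or.inl (Or.inl
      (Set.mem_iUnion.mpr ⟨k, Set.mem_iUnion.mpr ⟨l, g, hg, rfl⟩⟩)))⟩, rfl⟩
  have hB : ∀ k l, ∃ y, MonoidAlgebra.mapRingHom G ι y = B k l := fun k l =>
    mem_range_mapRingHom ι _ fun g hg => ⟨⟨_, hTS (Or.inl (Or.inr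
      (Set.mem_iUnion.mpr ⟨k, Set.mem_iUnion.mpr ⟨l, g, hg, rfl⟩⟩)))⟩, rfl⟩
  choose A₀ hA₀ using hA
  choose B₀ hB₀ using hB
  let A' : Matrix (Fin d) (Fin d) (MonoidAlgebra S G) := Matrix.of A₀
  let B' : Matrix (Fin d) (Fin d) (MonoidAlgebra S G) := Matrix.of B₀
  let Φ := (MonoidAlgebra.mapRingHom G ι).mapMatrix (m := Fin d)
  let Ψ := (MonoidAlgebra.mapRingHom G ψ).mapMatrix (m := Fin d)
  have hΦA : Φ A' = A := by ext1 k l; exact hA₀ k l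
  have hΦB : Φ B' = B := by ext1 k l; exact hB₀ k l
  have hAB' : A' * B' = 1 := by
    have hΦ : Function.Injective Φ := Matrix.map_injective (mapRingHom_injective ι hι)
    apply hΦ
    rw [map_mul, map_one, hΦA, hΦB, hAB]
  have hBA' : Ψ B' * Ψ A' = 1 := hst d hd _ _ (by rw [← map_mul, hAB', map_one])
  have h0 : Ψ (B' * A' - 1) = 0 := by rw [map_sub, map_mul, map_one, hBA', sub_self]
  let c' : S := ((B' * A' - 1) i j).coeff g
  have hιc : ι c' = c := by
    have h : Φ (B' * A' - 1) = B * A - 1 := by rw [map_sub, map_mul, map_one, hΦA, hΦB]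
    rw [← MonoidAlgebra.coeff_mapRingHom, hcdef, ← h]
    rfl
  have hψc : ψ c' = 0 := by
    rw [← MonoidAlgebra.coeff_mapRingHom]
    change ((Ψ (B' * A' - 1)) i j).coeff g = 0
    rw [h0]
    simp
  let e : S := ⟨c⁻¹, hTS (Or.inr rfl)⟩
  have hce : c' * e = 1 := by
    apply hι
    rw [map_mul, hιc, map_one]
    exact mul_inv_cancel₀ hc
  have h1 : ψ (c' * e) = 1 := by rw [hce, map_one]
  rw [map_mul, hψc, zero_mul] at h1
  exact zero_ne_one h1
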